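/- Let K be a field and w : ℕ → ℕ → K a Pascal-type weight, with w-product ∘ on K[[x]]. For a ∈ K[[x]] with a_0 ≠ 0 and b ∈ K[[x]], define the ∘-substitution b∘(a) := Σ_{n≥0} b_n · (xⁿ ∘ a^{(n)}) (well-defined since xⁿ ∘ a^{(n)} has order exactly n), and for b_0 ≠ 0, a_0 ≠ 0 define the lower triangular matrix (b, a)₀ whose n-th column is the coefficient sequence of b ∘ (xⁿ ∘ a^{(n)}). Then the set of matrices (b, a)₀ with b_0 ≠ 0 and a_0 ≠ 0 is a group under matrix multiplication, with multiplication rule (b, a)₀ · (f, g)₀ = (b ∘ (f∘(a)), a ∘ (g∘(a)))₀. -/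

import Mathlib

open PowerSeries

/-- A Pascal-type weight: the identities satisfied by the entries of every zero
generalized Pascal matrix `₀P`. -/
def IsPascalWeight {K : Type*} [Field K] (w : ℕ → ℕ → K) : Prop :=
  (∀ n, w n 0 = 1) ∧
  (∀ n m, m ≤ n → w n m = w n (n - m)) ∧
  (∀ n m k, m ≤ n → w (n + k) k * w n m = w (n + k) (m + k) * w (m + k) k)

/-- The `w`-product of formal power series:
`[xⁿ](a ∘ b) = ∑_{m=0}^{n} w(n,m)·aₘ·b_{n−m}`. -/
noncomputable def wmul {K : Type*} [Field K] (w : ℕ → ℕ → K)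
    (a b : PowerSeries K) : PowerSeries K :=
  PowerSeries.mk fun n => ∑ m ∈ Finset.range (n + 1),
    w n m * PowerSeries.coeff m a * PowerSeries.coeff (n - m) b

/-- The `n`-th `∘`-power of `a` (with `a^{(0)} = 1`). -/
noncomputable def wpow {K : Type*} [Field K] (w : ℕ → ℕ → K)
    (a : PowerSeries K) : ℕ → PowerSeries K
  | 0 => 1
  | n + 1 => wmul w a (wpow w a n)

/-- The `∘`-substitution `b∘(a) = ∑_{n≥0} bₙ·(xⁿ ∘ a^{(n)})`, computed
coefficientwise (`xⁿ ∘ a^{(n)}` has order `≥ n`). -/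
noncomputable def wsubst {K : Type*} [Field K] (w : ℕ → ℕ → K)
    (b a : PowerSeries K) : PowerSeries K :=
  PowerSeries.mk fun k => ∑ n ∈ Finset.range (k + 1),
    PowerSeries.coeff n b * PowerSeries.coeff k (wmul w (X ^ n) (wpow w a n))

/-- The matrix `(b, a)₀` whose `n`-th column is the coefficient sequence of
`b ∘ (xⁿ ∘ a^{(n)})`. -/
noncomputable def rioMat {K : Type*} [Field K] (w : ℕ → ℕ → K)
    (b a : PowerSeries K) (k n : ℕ) : K :=
  PowerSeries.coeff k (wmul w b (wmul w (X ^ n) (wpow w a n)))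

lemma wmul_comm' {K : Type*} [Field K] {w : ℕ → ℕ → K} (hw : IsPascalWeight w)
    (a b : PowerSeries K) : wmul w a b = wmul w b a := by
  ext n
  simp only [wmul, coeff_mk]
  rw [← Finset.sum_range_reflect]
  refine Finset.sum_congr rfl fun m hm => ?_
  have hm' : m ≤ n := by simpa [Nat.lt_succ_iff] using hm
  have e1 : n + 1 - 1 - m = n - m := by omega
  have e2 : n - (n - m) = m := by omega
  rw [e1, e2, ← hw.2.1 n m hm']
  ring

lemma wmul_assoc' {K : Type*} [Field K] {w : ℕ → ℕ → K} (hw : IsPascalWeight w)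
    (a b c : PowerSeries K) : wmul w (wmul w a b) c = wmul w a (wmul w b c) := by
  ext n
  simp only [wmul, coeff_mk]
  have h := Finset.sum_range_diag_flip (n + 1) (fun k j =>
    w n (k + j) * w (k + j) k * coeff k a * coeff j b * coeff (n - (k + j)) c)
  have e1 : ∀ m ∈ Finset.range (n + 1),
      w n m * (∑ k ∈ Finset.range (m + 1), w m k * coeff k a * coeff (m - k) b)
        * coeff (n - m) c =
      ∑ k ∈ Finset.range (m + 1), w n (k + (m - k)) * w (k + (m - k)) k * coeff k a
        * coeff (m - k) b * coeff (n - (k + (m - k))) c := by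
    intro m _
    rw [Finset.mul_sum, Finset.sum_mul]
    refine Finset.sum_congr rfl fun k hk => ?_
    have : k + (m - k) = m := by have := Finset.mem_range.1 hk; omega
    rw [this]; ring
  rw [Finset.sum_congr rfl e1, h]
  refine Finset.sum_congr rfl fun k hk => ?_
  have hk' : k ≤ n := by have := Finset.mem_range.1 hk; omega
  obtain ⟨N, rfl⟩ := Nat.exists_eq_add_of_le' hk'
  have e2 : N + k + 1 - k = N + k - k + 1 := by omega
  rw [e2, Finset.mul_sum]
  refine Finset.sum_congr rfl fun j hj => ?_
  have hj' : j ≤ N := by have := Finset.mem_range.1 hj; omega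
  have e3 : N + k - (k + j) = N - j := by omega
  have e4 : N + k - k = N := by omega
  have := hw.2.2 N j k hj'
  rw [e3, e4, add_comm k j, ← this]
  ring

lemma wmul_diag {K : Type*} [Field K] {w : ℕ → ℕ → K} (hw : IsPascalWeight w) (n : ℕ) :
    w n n = 1 := by
  rw [hw.2.1 n n le_rfl, Nat.sub_self, hw.1]

lemma one_wmul' {K : Type*} [Field K] {w : ℕ → ℕ → K} (hw : IsPascalWeight w)
    (a : PowerSeries K) : wmul w 1 a = a := by
  ext n
  simp only [wmul, coeff_mk]
  rw [Finset.sum_eq_single 0]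
  · simp [hw.1]
  · intro m _ hm; simp [coeff_one, hm]
  · simp

/-- `wmul` as a bilinear map. -/
noncomputable def wmulL {K : Type*} [Field K] (w : ℕ → ℕ → K) :
    PowerSeries K →ₗ[K] PowerSeries K →ₗ[K] PowerSeries K :=
  LinearMap.mk₂ K (wmul w)
    (by intro a b c; ext n; simp [wmul, mul_add, add_mul, Finset.sum_add_distrib])
    (by intro r a b; ext n; simp only [wmul, coeff_mk, map_smul, smul_eq_mul, Finset.mul_sum]
        refine Finset.sum_congr rfl fun _ _ => by ring)
    (by intro a b c; ext n; simp [wmul, mul_add, Finset.sum_add_distrib])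
    (by intro r a b; ext n; simp only [wmul, coeff_mk, map_smul, smul_eq_mul, Finset.mul_sum]
        refine Finset.sum_congr rfl fun _ _ => by ring)

lemma wmulL_apply {K : Type*} [Field K] (w : ℕ → ℕ → K) (a b : PowerSeries K) :
    wmulL w a b = wmul w a b := rfl

lemma coeff_wmul_congr {K : Type*} [Field K] (w : ℕ → ℕ → K) {a a' b b' : PowerSeries K} (k : ℕ)
    (ha : ∀ i ≤ k, coeff i a = coeff i a') (hb : ∀ i ≤ k, coeff i b = coeff i b') :
    coeff k (wmul w a b) = coeff k (wmul w a' b') := by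
  simp only [wmul, coeff_mk]
  refine Finset.sum_congr rfl fun m hm => ?_
  have : m ≤ k := by have := Finset.mem_range.1 hm; omega
  rw [ha m this, hb (k - m) (by omega)]

lemma coeff_wmul_lt {K : Type*} [Field K] (w : ℕ → ℕ → K) {a b : PowerSeries K} (k n : ℕ)
    (hb : ∀ i < n, coeff i b = 0) (h : k < n) : coeff k (wmul w a b) = 0 := by
  simp only [wmul, coeff_mk]
  refine Finset.sum_eq_zero fun m hm => ?_
  rw [hb (k - m) (by omega), mul_zero]

lemma coeff_wmul_self {K : Type*} [Field K] {w : ℕ → ℕ → K} (hw : IsPascalWeight w)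
    {a b : PowerSeries K} (n : ℕ)
    (hb : ∀ i < n, coeff i b = 0) : coeff n (wmul w a b) = coeff 0 a * coeff n b := by
  simp only [wmul, coeff_mk]
  rw [Finset.sum_eq_single 0]
  · simp [hw.1]
  · intro m hm h0
    have := Finset.mem_range.1 hm
    rw [hb (n - m) (by omega), mul_zero]
  · simp

lemma coeff_zero_wmul {K : Type*} [Field K] {w : ℕ → ℕ → K} (hw : IsPascalWeight w)
    (a b : PowerSeries K) : coeff 0 (wmul w a b) = coeff 0 a * coeff 0 b :=
  coeff_wmul_self hw 0 (by simp)

lemma coeff_zero_wpow {K : Type*} [Field K] {w : ℕ → ℕ → K} (hw : IsPascalWeight w)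
    (a : PowerSeries K) (n : ℕ) : coeff 0 (wpow w a n) = coeff 0 a ^ n := by
  induction n with
  | zero => simp [wpow]
  | succ n ih => rw [wpow, coeff_zero_wmul hw, ih, pow_succ']

lemma wpow_add' {K : Type*} [Field K] {w : ℕ → ℕ → K} (hw : IsPascalWeight w)
    (a : PowerSeries K) (i j : ℕ) : wpow w a (i + j) = wmul w (wpow w a i) (wpow w a j) := by
  induction i with
  | zero => rw [Nat.zero_add, wpow, one_wmul' hw]
  | succ n ih => rw [Nat.succ_add, wpow, wpow, ih, wmul_assoc' hw]

lemma wmul4 {K : Type*} [Field K] {w : ℕ → ℕ → K} (hw : IsPascalWeight w)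
    (a b c d : PowerSeries K) :
    wmul w (wmul w a b) (wmul w c d) = wmul w (wmul w a c) (wmul w b d) := by
  rw [wmul_assoc' hw, wmul_assoc' hw, ← wmul_assoc' hw b c d, wmul_comm' hw b c,
    wmul_assoc' hw]

lemma wpow_wmul {K : Type*} [Field K] {w : ℕ → ℕ → K} (hw : IsPascalWeight w)
    (a b : PowerSeries K) (n : ℕ) :
    wpow w (wmul w a b) n = wmul w (wpow w a n) (wpow w b n) := by
  induction n with
  | zero => simp only [wpow]; rw [one_wmul' hw]
  | succ n ih => simp only [wpow]; rw [ih, wmul4 hw]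

lemma X_wmul {K : Type*} [Field K] (w : ℕ → ℕ → K) (i j : ℕ) :
    wmul w (X ^ i) (X ^ j) = w (i + j) i • (X ^ (i + j) : PowerSeries K) := by
  ext n
  simp only [wmul, coeff_mk, map_smul, coeff_X_pow, smul_eq_mul]
  by_cases h : n = i + j
  · subst h
    rw [Finset.sum_eq_single i]
    · simp
    · intro m _ hm; simp [hm]
    · intro h; simp at h
  · rw [if_neg h, mul_zero]
    refine Finset.sum_eq_zero fun m hm => ?_
    have := Finset.mem_range.1 hm
    by_cases h1 : m = i
    · rw [if_neg (c := n - m = j) (by omega), mul_zero]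
    · rw [if_neg h1]; simp

/-- The basic series `xⁿ ∘ a^{(n)}`. -/
noncomputable def wE {K : Type*} [Field K] (w : ℕ → ℕ → K)
    (a : PowerSeries K) (n : ℕ) : PowerSeries K := wmul w (X ^ n) (wpow w a n)

lemma wE_mul {K : Type*} [Field K] {w : ℕ → ℕ → K} (hw : IsPascalWeight w)
    (a : PowerSeries K) (i j : ℕ) :
    wmul w (wE w a i) (wE w a j) = w (i + j) i • wE w a (i + j) := by
  unfold wE
  rw [wmul4 hw, X_wmul, ← wpow_add' hw, ← wmulL_apply, map_smul, LinearMap.smul_apply,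
    wmulL_apply]

lemma wE_lt {K : Type*} [Field K] {w : ℕ → ℕ → K} (hw : IsPascalWeight w)
    (a : PowerSeries K) (k n : ℕ) (h : k < n) : coeff k (wE w a n) = 0 := by
  unfold wE
  rw [wmul_comm' hw]
  refine coeff_wmul_lt w k n (fun i hi => ?_) h
  rw [coeff_X_pow, if_neg hi.ne]

lemma wE_self {K : Type*} [Field K] {w : ℕ → ℕ → K} (hw : IsPascalWeight w)
    (a : PowerSeries K) (n : ℕ) : coeff n (wE w a n) = coeff 0 a ^ n := by
  unfold wE
  rw [wmul_comm' hw, coeff_wmul_self hw n, coeff_zero_wpow hw]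
  · simp
  · intro i hi; rw [coeff_X_pow, if_neg hi.ne]

lemma coeff_wsubst {K : Type*} [Field K] {w : ℕ → ℕ → K} (hw : IsPascalWeight w)
    (u a : PowerSeries K) (k N : ℕ) (h : k < N) :
    coeff k (wsubst w u a) = coeff k (∑ n ∈ Finset.range N, coeff n u • wE w a n) := by
  simp only [wsubst, coeff_mk, map_sum, map_smul, smul_eq_mul]
  refine Finset.sum_subset (by simpa using h) fun n _ hn => ?_
  have : k < n := by simpa using hn
  change _ * coeff k (wE w a n) = 0
  rw [wE_lt hw a k n this, mul_zero]

lemma wsubst_wmul {K : Type*} [Field K] {w : ℕ → ℕ → K} (hw : IsPascalWeight w)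
    (u v a : PowerSeries K) :
    wsubst w (wmul w u v) a = wmul w (wsubst w u a) (wsubst w v a) := by
  ext k
  rw [coeff_wmul_congr w k (fun i hi => coeff_wsubst hw u a i (k + 1) (by omega))
    (fun i hi => coeff_wsubst hw v a i (k + 1) (by omega)),
    ← wmulL_apply w (Finset.sum _ _), map_sum (wmulL w), LinearMap.sum_apply]
  simp only [map_sum, map_smul, LinearMap.smul_apply, wmulL_apply, wE_mul hw, smul_eq_mul]
  rw [coeff_wsubst hw _ a k (k + 1) (by omega)]
  simp only [map_sum, map_smul, smul_eq_mul]
  have h := Finset.sum_range_diag_flip (k + 1) (fun i j =>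
    coeff i u * (coeff j v * (w (i + j) i * coeff k (wE w a (i + j)))))
  calc _ = _ := ?_
    _ = _ := h
    _ = _ := ?_
  · refine Finset.sum_congr rfl fun m _ => ?_
    simp only [wmul, coeff_mk]
    rw [Finset.sum_mul]
    refine Finset.sum_congr rfl fun i hi => ?_
    have : i + (m - i) = m := by have := Finset.mem_range.1 hi; omega
    rw [this]; ring
  · refine Finset.sum_congr rfl fun i _ => ?_
    refine (Finset.sum_subset (Finset.range_mono (Nat.sub_le _ _)) fun j _ hj => ?_).trans ?_
    · have : k < i + j := by have := mt Finset.mem_range.2 hj; omega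
      rw [wE_lt hw a _ _ this]; simp
    · refine Finset.sum_congr rfl fun j _ => by ring

lemma wsubst_X_pow {K : Type*} [Field K] {w : ℕ → ℕ → K} (hw : IsPascalWeight w)
    (a : PowerSeries K) (n : ℕ) : wsubst w (X ^ n) a = wE w a n := by
  ext k
  rw [coeff_wsubst hw _ a k (k + n + 1) (by omega), Finset.sum_eq_single n]
  · simp
  · intro m _ hm; simp [coeff_X_pow, hm]
  · intro h; simp at h

lemma wsubst_wpow {K : Type*} [Field K] {w : ℕ → ℕ → K} (hw : IsPascalWeight w)
    (g a : PowerSeries K) (n : ℕ) : wsubst w (wpow w g n) a = wpow w (wsubst w g a) n := by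
  induction n with
  | zero =>
    have := wsubst_X_pow hw a 0
    simp only [wE, wpow, pow_zero] at this ⊢
    rw [this, one_wmul' hw]
  | succ n ih => rw [wpow, wsubst_wmul hw, ih, wpow]

lemma rio_apply {K : Type*} [Field K] {w : ℕ → ℕ → K} (hw : IsPascalWeight w)
    (b a u : PowerSeries K) (k : ℕ) :
    ∑ j ∈ Finset.range (k + 1), rioMat w b a k j * coeff j u =
      coeff k (wmul w b (wsubst w u a)) := by
  rw [coeff_wmul_congr w k (fun i _ => rfl)
    (fun i hi => coeff_wsubst hw u a i (k + 1) (by omega)), ← wmulL_apply]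
  simp only [map_sum, map_smul, wmulL_apply, smul_eq_mul]
  refine Finset.sum_congr rfl fun j _ => ?_
  rw [mul_comm]; rfl

lemma rio_lt {K : Type*} [Field K] {w : ℕ → ℕ → K} (hw : IsPascalWeight w)
    (b a : PowerSeries K) (k n : ℕ) (h : k < n) : rioMat w b a k n = 0 :=
  coeff_wmul_lt w k n (fun i hi => wE_lt hw a i n hi) h

lemma rio_self {K : Type*} [Field K] {w : ℕ → ℕ → K} (hw : IsPascalWeight w)
    (b a : PowerSeries K) (n : ℕ) : rioMat w b a n n = coeff 0 b * coeff 0 a ^ n := by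
  rw [← wE_self hw]
  exact coeff_wmul_self hw n (fun i hi => wE_lt hw a i n hi)

lemma rio_mul {K : Type*} [Field K] {w : ℕ → ℕ → K} (hw : IsPascalWeight w)
    (b a f g : PowerSeries K) (k m : ℕ) :
    ∑ j ∈ Finset.range (k + 1), rioMat w b a k j * rioMat w f g j m =
        rioMat w (wmul w b (wsubst w f a)) (wmul w a (wsubst w g a)) k m := by
  have := rio_apply hw b a (wmul w f (wmul w (X ^ m) (wpow w g m))) k
  refine this.trans ?_
  rw [wsubst_wmul hw, wsubst_wmul hw, wsubst_X_pow hw, wsubst_wpow hw]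
  unfold rioMat wE
  rw [wpow_wmul hw, wmul_assoc' hw, wmul_assoc' hw]

lemma wpow_one' {K : Type*} [Field K] {w : ℕ → ℕ → K} (hw : IsPascalWeight w) (n : ℕ) :
    wpow w 1 n = 1 := by
  induction n with
  | zero => rfl
  | succ n ih => rw [wpow, ih, one_wmul' hw]

lemma rio_one {K : Type*} [Field K] {w : ℕ → ℕ → K} (hw : IsPascalWeight w) (k n : ℕ) :
    rioMat w 1 1 k n = if k = n then 1 else 0 := by
  unfold rioMat
  rw [one_wmul' hw, wpow_one' hw, wmul_comm' hw, one_wmul' hw, coeff_X_pow]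

/-- Forward substitution. -/
noncomputable def triSolve {K : Type*} [Field K] (T : ℕ → ℕ → K) (c : ℕ → K) : ℕ → K
  | k => (T k k)⁻¹ * (c k - ∑ j : Fin k, T k j * triSolve T c j)
termination_by k => k
decreasing_by exact j.2

lemma triSolve_spec {K : Type*} [Field K] (T : ℕ → ℕ → K) (c : ℕ → K)
    (hT : ∀ n, T n n ≠ 0) (k : ℕ) :
    ∑ j ∈ Finset.range (k + 1), T k j * triSolve T c j = c k := by
  rw [Finset.sum_range_succ, triSolve.eq_1 T c k, ← mul_assoc, mul_inv_cancel₀ (hT k), one_mul,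
    Fin.sum_univ_eq_sum_range (fun j => T k j * triSolve T c j) k]
  ring

lemma rio_solve {K : Type*} [Field K] {w : ℕ → ℕ → K} (hw : IsPascalWeight w)
    (b a : PowerSeries K) (hb : coeff 0 b ≠ 0) (ha : coeff 0 a ≠ 0) :
    ∃ f : PowerSeries K, coeff 0 f ≠ 0 ∧ wmul w b (wsubst w f a) = 1 := by
  have hT : ∀ n, rioMat w b a n n ≠ 0 := fun n => by
    rw [rio_self hw]; exact mul_ne_zero hb (pow_ne_zero _ ha)
  have key := triSolve_spec (rioMat w b a) (fun n => coeff n (1 : PowerSeries K)) hT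
  refine ⟨PowerSeries.mk (triSolve (rioMat w b a) (fun n => coeff n (1 : PowerSeries K))),
    ?_, ?_⟩
  · intro h
    have h0 := key 0
    rw [coeff_mk] at h
    rw [Finset.sum_range_one, h, mul_zero, coeff_zero_one] at h0
    exact zero_ne_one h0
  · ext k
    rw [← rio_apply hw, ← key k]
    simp only [coeff_mk]

lemma tri_comm {K : Type*} [Field K] (A B : ℕ → ℕ → K)
    (hA : ∀ k n, k < n → A k n = 0) (hB : ∀ k n, k < n → B k n = 0)
    (h : ∀ k m, ∑ j ∈ Finset.range (k + 1), A k j * B j m = if k = m then 1 else 0) (k m : ℕ) :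
    ∑ j ∈ Finset.range (k + 1), B k j * A j m = if k = m then 1 else 0 := by
  have ext : ∀ (P Q : ℕ → ℕ → K), (∀ k n, k < n → P k n = 0) → ∀ N k m, k < N →
      ∑ j ∈ Finset.range (k + 1), P k j * Q j m = ∑ j : Fin N, P k j * Q j m := by
    intro P Q hP N k m hk
    rw [Fin.sum_univ_eq_sum_range (fun j => P k j * Q j m) N]
    refine Finset.sum_subset (by simpa using hk) fun n _ hn => ?_
    rw [hP k n (by simpa using hn), zero_mul]
  set N := k + m + 1 with hN
  let A' : Matrix (Fin N) (Fin N) K := fun i j => A i j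
  let B' : Matrix (Fin N) (Fin N) K := fun i j => B i j
  have h1 : A' * B' = 1 := by
    ext i j
    rw [Matrix.mul_apply, Matrix.one_apply]
    have := h i j
    rw [ext A B hA N i j i.2] at this
    simpa [Fin.ext_iff] using this
  have h2 : B' * A' = 1 := mul_eq_one_comm.1 h1
  have h3 := congrFun (congrFun h2 ⟨k, by omega⟩) ⟨m, by omega⟩
  rw [Matrix.mul_apply, Matrix.one_apply] at h3
  rw [ext B A hB N k m (by omega)]
  simpa [Fin.ext_iff] using h3

lemma coeff_zero_wsubst {K : Type*} [Field K] {w : ℕ → ℕ → K} (hw : IsPascalWeight w)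
    (u a : PowerSeries K) : coeff 0 (wsubst w u a) = coeff 0 u := by
  rw [coeff_wsubst hw u a 0 1 (by omega)]
  simp [wE_self hw, -coeff_zero_eq_constantCoeff]

/-- The zero generalized Riordan group: the matrices `(b,a)₀` with `b₀ ≠ 0`,
`a₀ ≠ 0` are lower triangular and form a group under matrix multiplication, with
`(b,a)₀ · (f,g)₀ = (b ∘ f∘(a), a ∘ g∘(a))₀`:  products of members are members, the
identity matrix is `(1,1)₀`, and every member has a two-sided inverse which is a
member. -/
theorem zero_generalized_Riordan_group {K : Type*} [Field K]
    (w : ℕ → ℕ → K) (hw : IsPascalWeight w) :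
    (∀ b a : PowerSeries K, ∀ k n : ℕ, k < n → rioMat w b a k n = 0) ∧
    (∀ b a f g : PowerSeries K,
      PowerSeries.coeff 0 b ≠ 0 → PowerSeries.coeff 0 a ≠ 0 →
      PowerSeries.coeff 0 f ≠ 0 → PowerSeries.coeff 0 g ≠ 0 →
      (∀ k m : ℕ, ∑ j ∈ Finset.range (k + 1), rioMat w b a k j * rioMat w f g j m =
        rioMat w (wmul w b (wsubst w f a)) (wmul w a (wsubst w g a)) k m) ∧
      PowerSeries.coeff 0 (wmul w b (wsubst w f a)) ≠ 0 ∧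
      PowerSeries.coeff 0 (wmul w a (wsubst w g a)) ≠ 0) ∧
    (∀ k n : ℕ, rioMat w 1 1 k n = if k = n then 1 else 0) ∧
    (∀ b a : PowerSeries K,
      PowerSeries.coeff 0 b ≠ 0 → PowerSeries.coeff 0 a ≠ 0 →
      ∃ f g : PowerSeries K, PowerSeries.coeff 0 f ≠ 0 ∧ PowerSeries.coeff 0 g ≠ 0 ∧
        (∀ k m : ℕ, ∑ j ∈ Finset.range (k + 1),
          rioMat w b a k j * rioMat w f g j m = if k = m then 1 else 0) ∧
        (∀ k m : ℕ, ∑ j ∈ Finset.range (k + 1),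
          rioMat w f g k j * rioMat w b a j m = if k = m then 1 else 0)) := by
  refine ⟨rio_lt hw, ?_, rio_one hw, ?_⟩
  · intro b a f g hb ha hf hg
    refine ⟨rio_mul hw b a f g, ?_, ?_⟩
    · rw [coeff_zero_wmul hw, coeff_zero_wsubst hw]; exact mul_ne_zero hb hf
    · rw [coeff_zero_wmul hw, coeff_zero_wsubst hw]; exact mul_ne_zero ha hg
  · intro b a hb ha
    obtain ⟨f, hf, hf1⟩ := rio_solve hw b a hb ha
    obtain ⟨g, hg, hg1⟩ := rio_solve hw a a ha ha
    have h : ∀ k m : ℕ, ∑ j ∈ Finset.range (k + 1),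
          rioMat w b a k j * rioMat w f g j m = if k = m then 1 else 0 := by
      intro k m
      rw [rio_mul hw, hf1, hg1, rio_one hw]
    exact ⟨f, g, hf, hg, h, tri_comm _ _ (rio_lt hw b a) (rio_lt hw f g) h⟩
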